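/- arXiv:2512.17000 — 4 statements merged into one kernel-verified Lean document; each statement's English description precedes it below -/
import Mathlib

section
/- In the quantum Borel algebra 𝒪_q(B⁺) of type SO_n the following row relations hold: (i) z_{is} z_{it} = q^{−1} z_{it} z_{is} whenever i ≤ t < s ≤ n, s ≠ t', and (if n is odd) i ≠ n₀; (ii) z_{it'} z_{it} = q^{−2} z_{it} z_{it'} − (q − q^{−1}) Σ_{k=i}^{t−1} q^{k−t−1} z_{ik} z_{ik'} whenever i ≤ t < t' and (if n is odd) i ≠ n₀. -/
noncomputable section
open scoped TensorProduct

namespace SOq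

/-- `pr n k = n + 1 - k`, the "primed" index `k'`. -/
def pr (n k : ℕ) : ℕ := n + 1 - k

/-- `2 ρ_i` as an integer. -/
def twoRho (n i : ℕ) : ℤ :=
  if 2 * i < n + 1 then (n : ℤ) - 2 * i
  else if 2 * i = n + 1 then 0
  else (n : ℤ) + 2 - 2 * i

/-- Entries of the matrix `J`: `c_{ij} = δ_{j,i'} q^{-ρ_i}` (with `q^{1/2} := v`). -/
def Jc (n : ℕ) (v : ℂ) (i j : ℕ) : ℂ :=
  if j = pr n i then v ^ (-(twoRho n i)) else 0

/-- R-matrix coefficients `R^{ij}_{ab}`. -/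
def Rc (n : ℕ) (q v : ℂ) (i j a b : ℕ) : ℂ :=
  q ^ (((if i = j then 1 else 0) - (if i = pr n j then 1 else 0) : ℤ)) *
      (if i = a then (1 : ℂ) else 0) * (if j = b then (1 : ℂ) else 0) +
    (if a < i then (1 : ℂ) else 0) * (q - q⁻¹) *
      ((if j = a then (1 : ℂ) else 0) * (if i = b then (1 : ℂ) else 0) -
        Jc n v j i * Jc n v a b)

/-- The free algebra on the generators `z_{ij}`. -/
abbrev FA : Type := FreeAlgebra ℂ (ℕ × ℕ)

def zf (i j : ℕ) : FA := FreeAlgebra.ι ℂ (i, j)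

/-- The FRT relation element `FRT(i,b,j,a)`. -/
def frtRel (n : ℕ) (q v : ℂ) (i b j a : ℕ) : FA :=
  ∑ k ∈ Finset.Icc 1 n, ∑ l ∈ Finset.Icc 1 n,
    (Rc n q v l k a b • (zf i k * zf j l) - Rc n q v j i k l • (zf k a * zf l b))

/-- Entry `(i,j)` of `z J zᵗ J⁻¹ - Id` (note `J⁻¹ = J`). -/
def orthRel₁ (n : ℕ) (v : ℂ) (i j : ℕ) : FA :=
  (∑ k ∈ Finset.Icc 1 n, ∑ l ∈ Finset.Icc 1 n, ∑ m ∈ Finset.Icc 1 n,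
      (Jc n v k l * Jc n v m j) • (zf i k * zf m l)) - (if i = j then (1 : FA) else 0)

/-- Entry `(i,j)` of `J zᵗ J⁻¹ z - Id`. -/
def orthRel₂ (n : ℕ) (v : ℂ) (i j : ℕ) : FA :=
  (∑ k ∈ Finset.Icc 1 n, ∑ l ∈ Finset.Icc 1 n, ∑ m ∈ Finset.Icc 1 n,
      (Jc n v i k * Jc n v l m) • (zf l k * zf m j)) - (if i = j then (1 : FA) else 0)

/-- The defining relations of the quantum Borel algebra `𝒪_q(B⁺) ⊆ 𝒪_q(SO_n)`. -/
inductive Rel (n : ℕ) (q v : ℂ) : FA → FA → Prop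
  | frt : ∀ i b j a : ℕ, i ∈ Finset.Icc 1 n → b ∈ Finset.Icc 1 n → j ∈ Finset.Icc 1 n →
      a ∈ Finset.Icc 1 n → Rel n q v (frtRel n q v i b j a) 0
  | orth₁ : ∀ i j : ℕ, i ∈ Finset.Icc 1 n → j ∈ Finset.Icc 1 n →
      Rel n q v (orthRel₁ n v i j) 0
  | orth₂ : ∀ i j : ℕ, i ∈ Finset.Icc 1 n → j ∈ Finset.Icc 1 n →
      Rel n q v (orthRel₂ n v i j) 0
  | lower : ∀ i j : ℕ, j < i → Rel n q v (zf i j) 0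
  | out : ∀ i j : ℕ, (i = 0 ∨ j = 0 ∨ n < i ∨ n < j) → Rel n q v (zf i j) 0

/-- The quantum Borel algebra `𝒪_q(B⁺)`. -/
abbrev OB (n : ℕ) (q v : ℂ) : Type := RingQuot (Rel n q v)

/-- The generators `z_{ij}` of `𝒪_q(B⁺)`. -/
def z (n : ℕ) (q v : ℂ) (i j : ℕ) : OB n q v :=
  RingQuot.mkAlgHom ℂ (Rel n q v) (zf i j)

end SOq

namespace SOq

lemma pr_pr {n k : ℕ} (h : k ∈ Finset.Icc 1 n) : pr n (pr n k) = k := by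
  simp only [Finset.mem_Icc] at h; unfold pr; omega

lemma pr_mem {n k : ℕ} (h : k ∈ Finset.Icc 1 n) : pr n k ∈ Finset.Icc 1 n := by
  simp only [Finset.mem_Icc] at h ⊢; unfold pr; omega

lemma frt_z (n : ℕ) (q v : ℂ) (i b j a : ℕ) (hi : i ∈ Finset.Icc 1 n) (hb : b ∈ Finset.Icc 1 n)
    (hj : j ∈ Finset.Icc 1 n) (ha : a ∈ Finset.Icc 1 n) :
    ∑ k ∈ Finset.Icc 1 n, ∑ l ∈ Finset.Icc 1 n,
      (Rc n q v l k a b • (z n q v i k * z n q v j l)) =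
    ∑ k ∈ Finset.Icc 1 n, ∑ l ∈ Finset.Icc 1 n,
      Rc n q v j i k l • (z n q v k a * z n q v l b) := by
  have h := RingQuot.mkAlgHom_rel ℂ (Rel.frt (q := q) (v := v) i b j a hi hb hj ha)
  simp only [frtRel, map_sum, map_sub, map_smul, map_mul, map_zero, Finset.sum_sub_distrib] at h
  exact sub_eq_zero.mp h

lemma lower_z (n : ℕ) (q v : ℂ) (i j : ℕ) (h : j < i) : z n q v i j = 0 := by
  have h := RingQuot.mkAlgHom_rel ℂ (Rel.lower (n := n) (q := q) (v := v) i j h)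
  rwa [map_zero] at h

lemma orth_z0 (n : ℕ) (q v : ℂ) (i : ℕ) (hi : i ∈ Finset.Icc 1 n)
    (h2 : 2 * i ≠ n + 1) :
    ∑ k ∈ Finset.Icc 1 n, ∑ l ∈ Finset.Icc 1 n, ∑ m ∈ Finset.Icc 1 n,
      (Jc n v k l * Jc n v m (pr n i)) • (z n q v i k * z n q v m l) = 0 := by
  have h := RingQuot.mkAlgHom_rel ℂ (Rel.orth₁ (q := q) (v := v) i (pr n i) hi (pr_mem hi))
  have hne : i ≠ pr n i := by
    simp only [Finset.mem_Icc] at hi; unfold pr; omega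
  simp only [orthRel₁, map_sum, map_smul, map_mul, map_zero, if_neg hne, sub_zero] at h
  exact h

/-- The consequences of the defining relations that are used. -/
structure Good {A : Type} [Ring A] [Algebra ℂ A] (n : ℕ) (q v : ℂ) (w : ℕ → ℕ → A) : Prop where
  frt : ∀ (i b j a : ℕ) (_ : i ∈ Finset.Icc 1 n) (_ : b ∈ Finset.Icc 1 n)
    (_ : j ∈ Finset.Icc 1 n) (_ : a ∈ Finset.Icc 1 n),
    ∑ k ∈ Finset.Icc 1 n, ∑ l ∈ Finset.Icc 1 n,
      (Rc n q v l k a b • (w i k * w j l)) =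
    ∑ k ∈ Finset.Icc 1 n, ∑ l ∈ Finset.Icc 1 n,
      Rc n q v j i k l • (w k a * w l b)
  lower : ∀ i j : ℕ, j < i → w i j = 0
  orth : ∀ (i : ℕ) (_ : i ∈ Finset.Icc 1 n) (_ : 2 * i ≠ n + 1),
    ∑ k ∈ Finset.Icc 1 n, ∑ l ∈ Finset.Icc 1 n, ∑ m ∈ Finset.Icc 1 n,
      (Jc n v k l * Jc n v m (pr n i)) • (w i k * w m l) = 0

lemma orth_z {A : Type} [Ring A] [Algebra ℂ A] (n : ℕ) (q v : ℂ) (w : ℕ → ℕ → A) (hw : Good n q v w) (hv : v ≠ 0) (i : ℕ) (hi : i ∈ Finset.Icc 1 n)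
    (h2 : 2 * i ≠ n + 1) :
    ∑ k ∈ Finset.Icc 1 n, v ^ (-(twoRho n k)) • (w i k * w i (pr n k)) = 0 := by
  have h := hw.orth i hi h2
  have e : ∀ k ∈ Finset.Icc 1 n, ∑ l ∈ Finset.Icc 1 n, ∑ m ∈ Finset.Icc 1 n,
      (Jc n v k l * Jc n v m (pr n i)) • (w i k * w m l) =
      v ^ (-(twoRho n i)) • (v ^ (-(twoRho n k)) • (w i k * w i (pr n k))) := by
    intro k hk
    rw [Finset.sum_eq_single (pr n k), Finset.sum_eq_single i]
    · simp [Jc, smul_smul, mul_comm]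
    · intro m hm hmi
      have : pr n i ≠ pr n m := by
        intro h; apply hmi; rw [← pr_pr hm, ← h, pr_pr hi]
      simp [Jc, this]
    · exact fun h => absurd hi h
    · intro l _ hl
      simp [Jc, hl]
    · exact fun h => absurd (pr_mem hk) h
  rw [Finset.sum_congr rfl e, ← Finset.smul_sum] at h
  exact (smul_eq_zero.mp h).resolve_left (zpow_ne_zero _ hv)

lemma row_gen {A : Type} [Ring A] [Algebra ℂ A] (n : ℕ) (q v : ℂ) (w : ℕ → ℕ → A) (hw : Good n q v w) (i a b : ℕ) (hi : i ∈ Finset.Icc 1 n)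
    (ha : a ∈ Finset.Icc 1 n) (hb : b ∈ Finset.Icc 1 n) (hab : a < b) (h2 : 2 * i ≠ n + 1) :
    q ^ (-(if a = pr n b then 1 else 0) : ℤ) • (w i b * w i a)
      + (q - q⁻¹) • (w i a * w i b)
      - ((q - q⁻¹) * Jc n v a b) • ∑ k ∈ Finset.Icc 1 n, (if a < pr n k then (1 : ℂ) else 0) •
          v ^ (-(twoRho n k)) • (w i k * w i (pr n k))
      = q • (w i a * w i b) := by
  have h := hw.frt i b i a hi hb hi ha
  have hne : i ≠ pr n i := by
    simp only [Finset.mem_Icc] at hi; unfold pr; omega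
  have eR : ∑ k ∈ Finset.Icc 1 n, ∑ l ∈ Finset.Icc 1 n,
      Rc n q v i i k l • (w k a * w l b) = q • (w i a * w i b) := by
    rw [Finset.sum_eq_single i, Finset.sum_eq_single i]
    · simp [Rc, hne]
    · intro l _ hl
      simp [Rc, hl.symm]
    · exact fun h => absurd hi h
    · intro k _ hk
      apply Finset.sum_eq_zero
      intro l _
      simp [Rc, hk.symm, Jc, hne]
    · exact fun h => absurd hi h
  rw [eR] at h
  rw [← h]
  have e : ∀ k l, Rc n q v l k a b • (w i k * w i l) =
      (if k = b then (if l = a then q ^ (-(if a = pr n b then 1 else 0) : ℤ) •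
        (w i b * w i a) else 0) else 0)
      + (if k = a then (if l = b then (q - q⁻¹) • (w i a * w i b) else 0) else 0)
      - (if l = pr n k then ((q - q⁻¹) * Jc n v a b) • (if a < pr n k then (1 : ℂ) else 0) •
          v ^ (-(twoRho n k)) • (w i k * w i (pr n k)) else 0) := by
    intro k l
    have e1 : Rc n q v l k a b = 
       (if k = b then (if l = a then q ^ (-(if a = pr n b then 1 else 0) : ℤ) else 0) else 0)
       + (if k = a then (if l = b then (q - q⁻¹) else 0) else 0)
       - (if l = pr n k then ((q - q⁻¹) * Jc n v a b) * ((if a < pr n k then (1 : ℂ) else 0) *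
          v ^ (-(twoRho n k))) else 0) := by
      have A : q ^ (((if l = k then 1 else 0) - (if l = pr n k then 1 else 0) : ℤ)) *
          (if l = a then (1 : ℂ) else 0) * (if k = b then (1 : ℂ) else 0) =
          (if k = b then (if l = a then q ^ (-(if a = pr n b then 1 else 0) : ℤ) else 0) else 0) := by
        by_cases h1 : k = b
        · by_cases h3 : l = a
          · subst h1 h3
            simp [hab.ne]
          · simp [h3]
        · simp [h1]
      have B : (if a < l then (1 : ℂ) else 0) * (q - q⁻¹) *
          ((if k = a then (1 : ℂ) else 0) * (if l = b then (1 : ℂ) else 0)) =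
          (if k = a then (if l = b then (q - q⁻¹) else 0) else 0) := by
        by_cases h1 : k = a
        · by_cases h3 : l = b
          · subst h1 h3
            simp [hab]
          · simp [h3]
        · simp [h1]
      have C : (if a < l then (1 : ℂ) else 0) * (q - q⁻¹) * (Jc n v k l * Jc n v a b) =
          (if l = pr n k then ((q - q⁻¹) * Jc n v a b) * ((if a < pr n k then (1 : ℂ) else 0) *
          v ^ (-(twoRho n k))) else 0) := by
        by_cases h1 : l = pr n k
        · subst h1
          rw [if_pos rfl, Jc, if_pos rfl]; ring
        · rw [if_neg h1, Jc, if_neg h1]; ring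
      rw [← A, ← B, ← C, Rc]; ring
    rw [e1, sub_smul, add_smul]
    congr 1
    · congr 1
      · split_ifs with h1 h3 <;> first | (subst h1 h3; rfl) | simp
      · split_ifs with h1 h3 <;> first | (subst h1 h3; rfl) | simp
    · split_ifs with h1 <;> first | (subst h1; simp only [smul_smul]) | simp
  simp only [e, Finset.sum_sub_distrib, Finset.sum_add_distrib]
  congr 1
  · congr 1
    · rw [Finset.sum_eq_single b, Finset.sum_eq_single a]
      · simp
      · intro l _ hl; simp [hl]
      · exact fun h => absurd ha h
      · intro k _ hk; simp [hk]
      · exact fun h => absurd hb h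
    · rw [Finset.sum_eq_single a, Finset.sum_eq_single b]
      · simp
      · intro l _ hl; simp [hl]
      · exact fun h => absurd hb h
      · intro k _ hk; simp [hk]
      · exact fun h => absurd ha h
  · rw [Finset.smul_sum]
    refine Finset.sum_congr rfl fun k hk => ?_
    rw [Finset.sum_eq_single (pr n k)]
    · simp only [if_true]
    · intro l _ hl; rw [if_neg hl]
    · exact fun h => absurd (pr_mem hk) h

/-- `q² A_t = B_t - (q²-1) q^t Σ_{m<t} q^{-m} A_m`. -/
lemma row_rec {A : Type} [Ring A] [Algebra ℂ A] (n : ℕ) (q v : ℂ) (w : ℕ → ℕ → A) (hw : Good n q v w) (hq0 : q ≠ 0) (hv : v ^ 2 = q) (i t : ℕ)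
    (hi : i ∈ Finset.Icc 1 n) (ht1 : 1 ≤ t) (ht : t < pr n t) (h2 : 2 * i ≠ n + 1) :
    q ^ 2 • (w i (pr n t) * w i t) = w i t * w i (pr n t)
      - ((q ^ 2 - 1) * q ^ (t : ℤ)) • ∑ m ∈ Finset.Ico 1 t,
        q ^ (-(m : ℤ)) • (w i (pr n m) * w i m) := by
  have hv0 : v ≠ 0 := by rintro rfl; apply hq0; rw [← hv]; simp
  have htm : t ∈ Finset.Icc 1 n := by
    unfold pr at ht; simp only [Finset.mem_Icc]; omega
  have h := row_gen n q v w hw i t (pr n t) hi htm (pr_mem htm) ht h2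
  have ho := orth_z n q v w hw hv0 i hi h2
  have hS : ∑ k ∈ Finset.Icc 1 n, (if t < pr n k then (1 : ℂ) else 0) •
          v ^ (-(twoRho n k)) • (w i k * w i (pr n k)) =
      - (v ^ (n : ℤ) • ∑ m ∈ Finset.Icc 1 t,
          q ^ (-(m : ℤ)) • (w i (pr n m) * w i m)) := by
    have hsp : ∑ k ∈ Finset.Icc 1 n, (if t < pr n k then (1 : ℂ) else 0) •
          v ^ (-(twoRho n k)) • (w i k * w i (pr n k)) +
        ∑ k ∈ Finset.Icc 1 n, (if t < pr n k then (0 : ℂ) else 1) •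
          v ^ (-(twoRho n k)) • (w i k * w i (pr n k)) = 0 := by
      rw [← Finset.sum_add_distrib, ← ho]
      refine Finset.sum_congr rfl fun k _ => ?_
      split_ifs <;> simp
    rw [eq_neg_of_add_eq_zero_left hsp]
    congr 1
    rw [Finset.smul_sum]
    symm
    apply Finset.sum_of_injOn (pr n)
    · intro a ha b hb hab
      simp only [Finset.coe_Icc, Set.mem_Icc] at ha hb
      unfold pr at *; omega
    · intro a ha
      simp only [Finset.coe_Icc, Set.mem_Icc] at ha ⊢
      unfold pr at *; omega
    · intro k hk hk'
      rw [if_pos, zero_smul]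
      by_contra hlt
      apply hk'
      refine ⟨pr n k, ?_, pr_pr hk⟩
      simp only [Finset.coe_Icc, Set.mem_Icc, Finset.mem_Icc] at *
      unfold pr at *; omega
    · intro m hm
      have hmn : m ∈ Finset.Icc 1 n := by
        simp only [Finset.mem_Icc] at *; unfold pr at *; omega
      rw [pr_pr hmn]
      simp only [Finset.mem_Icc] at hm
      rw [if_neg (by omega), one_smul, smul_smul]
      congr 1
      have : twoRho n (pr n m) = -(n : ℤ) + 2 * m := by
        unfold twoRho; unfold pr at *
        rw [if_neg (by omega), if_neg (by omega)]
        omega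
      rw [this, ← hv, ← zpow_natCast, ← zpow_mul, ← zpow_add₀ hv0]
      congr 1; push_cast; ring
  rw [hS, pr_pr htm, if_pos rfl] at h
  have hJ : Jc n v t (pr n t) * v ^ (n : ℤ) = q ^ (t : ℤ) := by
    rw [Jc, if_pos rfl, twoRho, if_pos (by unfold pr at ht; omega), ← hv, ← zpow_natCast,
      ← zpow_mul, ← zpow_add₀ hv0]
    congr 1; push_cast; ring
  have hsum : ∑ m ∈ Finset.Icc 1 t, q ^ (-(m : ℤ)) • (w i (pr n m) * w i m) =
     ∑ m ∈ Finset.Ico 1 t, q ^ (-(m : ℤ)) • (w i (pr n m) * w i m) +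
      q ^ (-(t : ℤ)) • (w i (pr n t) * w i t) := by
    rw [← Finset.sum_Ico_succ_top ht1]; rfl
  rw [hsum] at h
  generalize ∑ m ∈ Finset.Ico 1 t, q ^ (-(m : ℤ)) • (w i (pr n m) * w i m) = T at *
  generalize w i (pr n t) * w i t = A at *
  generalize w i t * w i (pr n t) = B at *
  rw [smul_neg, smul_smul, mul_assoc, hJ, smul_add, smul_smul, mul_assoc, ← zpow_add₀ hq0] at h
  simp only [add_neg_cancel, zpow_zero, mul_one, zpow_neg_one] at h
  have h3 := congrArg (fun x => q • x) h
  simp only [smul_add, smul_sub, smul_neg, smul_smul, sub_neg_eq_add] at h3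
  have e1 : q * q⁻¹ = 1 := mul_inv_cancel₀ hq0
  have e2 : q * (q - q⁻¹) = q ^ 2 - 1 := by rw [mul_sub, e1]; ring
  rw [e1, e2, ← mul_assoc, e2, one_smul] at h3
  generalize q ^ (t : ℤ) = x at *
  linear_combination (norm := module) h3

lemma row_sum {A : Type} [Ring A] [Algebra ℂ A] (n : ℕ) (q v : ℂ) (w : ℕ → ℕ → A) (hw : Good n q v w) (hq0 : q ≠ 0) (hv : v ^ 2 = q) (i : ℕ)
    (hi : i ∈ Finset.Icc 1 n) (h2 : 2 * i ≠ n + 1) (t : ℕ) (ht1 : 1 ≤ t) (ht : t < pr n t) :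
    ∑ m ∈ Finset.Ico 1 t, q ^ (-(m : ℤ)) • (w i (pr n m) * w i m) =
    q ^ (-2 * (t : ℤ)) • ∑ m ∈ Finset.Ico 1 t, q ^ (m : ℤ) • (w i m * w i (pr n m)) := by
  induction t, ht1 using Nat.le_induction with
  | base => simp
  | succ t ht1 ih =>
    have ht' : t < pr n t := by unfold pr at *; omega
    have hr := row_rec n q v w hw hq0 hv i t hi ht1 ht' h2
    specialize ih ht'
    rw [Finset.sum_Ico_succ_top ht1, Finset.sum_Ico_succ_top ht1]
    have hA : w i (pr n t) * w i t = q ^ (-2 : ℤ) • (q ^ 2 •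
        (w i (pr n t) * w i t)) := by
      rw [smul_smul, ← zpow_natCast, ← zpow_add₀ hq0]; simp
    rw [hA, hr, ih]
    generalize ∑ m ∈ Finset.Ico 1 t, q ^ (m : ℤ) • (w i m * w i (pr n m)) = U
    generalize w i t * w i (pr n t) = B
    have hx : q ^ t ≠ 0 := pow_ne_zero _ hq0
    have e1 : q ^ (-2 * (t : ℤ)) = ((q ^ t)⁻¹) ^ 2 := by
      rw [mul_comm, zpow_mul, zpow_natCast]; simp [zpow_neg]
    have e2 : q ^ (-2 * ((t + 1 : ℕ) : ℤ)) = ((q ^ t)⁻¹) ^ 2 * (q⁻¹) ^ 2 := by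
      push_cast; rw [mul_add, zpow_add₀ hq0, e1]; simp [zpow_neg]
    have e3 : q ^ (-2 : ℤ) = (q⁻¹) ^ 2 := by simp [zpow_neg]
    rw [e1, e2, e3, zpow_neg, zpow_natCast]
    match_scalars <;> field_simp
    ring

/-- Row relations in the quantum Borel algebra `𝒪_q(B⁺)` of type `SO_n`. -/
theorem row_gen_all {A : Type} [Ring A] [Algebra ℂ A] (n : ℕ) (q v : ℂ) (w : ℕ → ℕ → A) (hw : Good n q v w) (hq0 : q ≠ 0) (hv : v ^ 2 = q) :
    (∀ i t s : ℕ, 1 ≤ i → i ≤ t → t < s → s ≤ n → s ≠ pr n t → 2 * i ≠ n + 1 →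
      w i s * w i t = q⁻¹ • (w i t * w i s)) ∧
    (∀ i t : ℕ, 1 ≤ i → i ≤ t → t < pr n t → 2 * i ≠ n + 1 →
      w i (pr n t) * w i t =
        (q ^ (-2 : ℤ)) • (w i t * w i (pr n t)) -
          (q - q⁻¹) •
            ∑ k ∈ Finset.Ico i t,
              (q ^ ((k : ℤ) - (t : ℤ) - 1)) • (w i k * w i (pr n k))) := by
  constructor
  · intro i t s h1 hit hts hsn hs h2
    have h := row_gen n q v w hw i t s (by simp; omega) (by simp; omega) (by simp; omega) hts h2
    have hne : t ≠ pr n s := by unfold pr at *; omega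
    rw [if_neg hne, Jc, if_neg hs, mul_zero, zero_smul, sub_zero, neg_zero, zpow_zero,
      one_smul, sub_smul] at h
    linear_combination (norm := module) h
  · intro i t h1 hit ht h2
    have hi : i ∈ Finset.Icc 1 n := by unfold pr at ht; simp only [Finset.mem_Icc]; omega
    have ht1 : 1 ≤ t := by omega
    have hr := row_rec n q v w hw hq0 hv i t hi ht1 ht h2
    rw [row_sum n q v w hw hq0 hv i hi h2 t ht1 ht] at hr
    have hU : ∑ k ∈ Finset.Ico i t,
        (q ^ ((k : ℤ) - (t : ℤ) - 1)) • (w i k * w i (pr n k)) =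
        q ^ (-(t : ℤ) - 1) • ∑ m ∈ Finset.Ico 1 t,
          q ^ (m : ℤ) • (w i m * w i (pr n m)) := by
      rw [Finset.smul_sum]
      have : ∀ m ∈ Finset.Ico 1 t, q ^ (-(t : ℤ) - 1) •
          q ^ (m : ℤ) • (w i m * w i (pr n m)) =
          (q ^ ((m : ℤ) - (t : ℤ) - 1)) • (w i m * w i (pr n m)) := by
        intro m _
        rw [smul_smul, ← zpow_add₀ hq0]; congr 2; ring
      rw [Finset.sum_congr rfl this]
      apply Finset.sum_subset (Finset.Ico_subset_Ico_left h1)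
      intro m hm hm'
      simp only [Finset.mem_Ico] at hm hm'
      rw [hw.lower i m (by omega)]; simp
    rw [hU]
    have hA : w i (pr n t) * w i t = q ^ (-2 : ℤ) • (q ^ 2 •
        (w i (pr n t) * w i t)) := by
      rw [smul_smul, ← zpow_natCast, ← zpow_add₀ hq0]; simp
    rw [hA, hr]
    generalize ∑ m ∈ Finset.Ico 1 t, q ^ (m : ℤ) • (w i m * w i (pr n m)) = U
    generalize w i t * w i (pr n t) = B
    have hx : q ^ t ≠ 0 := pow_ne_zero _ hq0
    have e1 : q ^ (-2 * (t : ℤ)) = ((q ^ t)⁻¹) ^ 2 := by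
      rw [mul_comm, zpow_mul, zpow_natCast]; simp [zpow_neg]
    have e3 : q ^ (-2 : ℤ) = (q⁻¹) ^ 2 := by simp [zpow_neg]
    have e4 : q ^ (-(t : ℤ) - 1) = (q ^ t)⁻¹ * q⁻¹ := by
      rw [sub_eq_add_neg, zpow_add₀ hq0, zpow_neg, zpow_natCast, zpow_neg_one]
    rw [e1, e3, e4, zpow_natCast]
    match_scalars <;> field_simp

/-- Row relations in the quantum Borel algebra `𝒪_q(B⁺)` of type `SO_n`. -/
theorem row_relations (n : ℕ) (hn : 3 ≤ n) (q v : ℂ) (hq0 : q ≠ 0) (hv : v ^ 2 = q) :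
    (∀ i t s : ℕ, 1 ≤ i → i ≤ t → t < s → s ≤ n → s ≠ pr n t → 2 * i ≠ n + 1 →
      z n q v i s * z n q v i t = q⁻¹ • (z n q v i t * z n q v i s)) ∧
    (∀ i t : ℕ, 1 ≤ i → i ≤ t → t < pr n t → 2 * i ≠ n + 1 →
      z n q v i (pr n t) * z n q v i t =
        (q ^ (-2 : ℤ)) • (z n q v i t * z n q v i (pr n t)) -
          (q - q⁻¹) •
            ∑ k ∈ Finset.Ico i t,
              (q ^ ((k : ℤ) - (t : ℤ) - 1)) • (z n q v i k * z n q v i (pr n k))) := by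
  exact row_gen_all n q v (z n q v) ⟨frt_z n q v, lower_z n q v, orth_z0 n q v⟩ hq0 hv

end SOq
end
end

section
/- In the quantum Borel algebra 𝒪_q(B⁺) of type A_θ: each z_{kk} (1 ≤ k ≤ θ+1) is invertible, and the elements defined recursively by E_{i,i+1} := −(q − q^{−1})^{−1} z_{i,i+1} z_{i+1,i+1}^{−1} for 1 ≤ i ≤ θ, and E_{i,j} := E_{i,j−1} E_{j−1,j} − q^{−1} E_{j−1,j} E_{i,j−1} for j − i ≥ 2, satisfy E_{i,j} = (−1)^{j−i} q^{i−j+1} (q − q^{−1})^{−1} z_{ij} z_{jj}^{−1} for all 1 ≤ i < j ≤ θ+1. (Under the isomorphism ψ : U_q^P(𝔟⁺) → 𝒪_q(B⁺), E_{i,j} is the image of the iterated q-bracket root vector of the positive root α_i + ⋯ + α_{j−1}.) -/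
noncomputable section

namespace SLq

/-- The free algebra on the generators `z_{ij}`. -/
abbrev FA : Type := FreeAlgebra ℂ (ℕ × ℕ)

def zf (i j : ℕ) : FA := FreeAlgebra.ι ℂ (i, j)

/-- The number of inversions (the length) of a permutation. -/
def len {m : ℕ} (σ : Equiv.Perm (Fin m)) : ℕ :=
  (Finset.univ.filter (fun p : Fin m × Fin m => p.1 < p.2 ∧ σ p.2 < σ p.1)).card

/-- The quantum determinant `det_q = ∑_σ (-q)^{ℓ(σ)} z_{1σ(1)} ⋯ z_{θ+1,σ(θ+1)}`. -/
def detq (θ : ℕ) (q : ℂ) : FA :=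
  ∑ σ : Equiv.Perm (Fin (θ + 1)),
    ((-q) ^ len σ) •
      (List.ofFn (fun k : Fin (θ + 1) => zf ((k : ℕ) + 1) ((σ k : ℕ) + 1))).prod

/-- Defining relations of the quantum Borel algebra `𝒪_q(B⁺) ⊆ 𝒪_q(SL_{θ+1})`. -/
inductive Rel (θ : ℕ) (q : ℂ) : FA → FA → Prop
  | col : ∀ i j s : ℕ, 1 ≤ i → i < j → j ≤ θ + 1 → 1 ≤ s → s ≤ θ + 1 →
      Rel θ q (zf i s * zf j s) (q • (zf j s * zf i s))
  | row : ∀ i j s : ℕ, 1 ≤ i → i < j → j ≤ θ + 1 → 1 ≤ s → s ≤ θ + 1 →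
      Rel θ q (zf s i * zf s j) (q • (zf s j * zf s i))
  | comm : ∀ i j s t : ℕ, 1 ≤ i → i < j → j ≤ θ + 1 → 1 ≤ s → s < t → t ≤ θ + 1 →
      Rel θ q (zf i t * zf j s) (zf j s * zf i t)
  | qcomm : ∀ i j s t : ℕ, 1 ≤ i → i < j → j ≤ θ + 1 → 1 ≤ s → s < t → t ≤ θ + 1 →
      Rel θ q (zf i s * zf j t - zf j t * zf i s) ((q - q⁻¹) • (zf i t * zf j s))
  | det : Rel θ q (detq θ q) 1
  | lower : ∀ i j : ℕ, j < i → Rel θ q (zf i j) 0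
  | out : ∀ i j : ℕ, (i = 0 ∨ j = 0 ∨ θ + 1 < i ∨ θ + 1 < j) → Rel θ q (zf i j) 0

/-- The quantum Borel algebra `𝒪_q(B⁺)` of type `A_θ`. -/
abbrev OB (θ : ℕ) (q : ℂ) : Type := RingQuot (Rel θ q)

/-- The generators `z_{ij}` of `𝒪_q(B⁺)`. -/
def z (θ : ℕ) (q : ℂ) (i j : ℕ) : OB θ q :=
  RingQuot.mkAlgHom ℂ (Rel θ q) (zf i j)

theorem z_lower (θ : ℕ) (q : ℂ) {i j : ℕ} (h : j < i) : z θ q i j = 0 := by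
  have := RingQuot.mkAlgHom_rel ℂ (Rel.lower (θ := θ) (q := q) i j h)
  simpa [z] using this

theorem z_row (θ : ℕ) (q : ℂ) {i j s : ℕ} (h1 : 1 ≤ i) (h2 : i < j) (h3 : j ≤ θ + 1)
    (h4 : 1 ≤ s) (h5 : s ≤ θ + 1) :
    z θ q s i * z θ q s j = q • (z θ q s j * z θ q s i) := by
  have := RingQuot.mkAlgHom_rel ℂ (Rel.row (θ := θ) (q := q) i j s h1 h2 h3 h4 h5)
  simpa only [z, map_mul, map_smul] using this

theorem z_qcomm (θ : ℕ) (q : ℂ) {i j s t : ℕ} (h1 : 1 ≤ i) (h2 : i < j) (h3 : j ≤ θ + 1)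
    (h4 : 1 ≤ s) (h5 : s < t) (h6 : t ≤ θ + 1) :
    z θ q i s * z θ q j t - z θ q j t * z θ q i s
      = (q - q⁻¹) • (z θ q i t * z θ q j s) := by
  have := RingQuot.mkAlgHom_rel ℂ (Rel.qcomm (θ := θ) (q := q) i j s t h1 h2 h3 h4 h5 h6)
  simpa only [z, map_mul, map_smul, map_sub] using this

theorem z_commute (θ : ℕ) (q : ℂ) {i m j : ℕ} (h1 : 1 ≤ i) (h0 : 1 ≤ m) (h2 : i < j)
    (hm : m < j) (h3 : j ≤ θ + 1) : Commute (z θ q i m) (z θ q j j) := by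
  have := z_qcomm θ q h1 h2 h3 h0 hm h3
  rw [z_lower θ q hm, mul_zero, smul_zero, sub_eq_zero] at this
  exact this

theorem diag_commute (θ : ℕ) (q : ℂ) {i j : ℕ} (h1 : 1 ≤ i) (h2 : 1 ≤ j)
    (h3 : i ≤ θ + 1) (h4 : j ≤ θ + 1) : Commute (z θ q i i) (z θ q j j) := by
  rcases lt_trichotomy i j with h | h | h
  · exact z_commute θ q h1 h1 h h h4
  · subst h; exact Commute.refl _
  · exact (z_commute θ q h2 h2 h h h3).symm

theorem perm_eq_one {m : ℕ} (σ : Equiv.Perm (Fin m)) (h : ∀ k, k ≤ σ k) : σ = 1 := by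
  have h1 : ∑ k : Fin m, (k : ℕ) = ∑ k : Fin m, ((σ k : Fin m) : ℕ) :=
    (Equiv.sum_comp σ (fun k : Fin m => (k : ℕ))).symm
  have h2 := (Finset.sum_eq_sum_iff_of_le (fun (k : Fin m) _ => (show (k : ℕ) ≤ (σ k : ℕ) from h k))).1 h1
  ext k
  simpa using (h2 k (Finset.mem_univ k)).symm

theorem diag_prod (θ : ℕ) (q : ℂ) :
    (List.ofFn (fun k : Fin (θ + 1) => z θ q ((k : ℕ) + 1) ((k : ℕ) + 1))).prod = 1 := by
  have := RingQuot.mkAlgHom_rel ℂ (Rel.det (θ := θ) (q := q))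
  rw [map_one, detq, map_sum, Finset.sum_eq_single 1] at this
  · have hl : len (1 : Equiv.Perm (Fin (θ + 1))) = 0 := by
      unfold len
      rw [Finset.card_eq_zero, Finset.filter_eq_empty_iff]
      rintro ⟨a, b⟩ _ ⟨h1, h2⟩
      exact absurd h1 (not_lt.2 (le_of_lt h2))
    rw [hl, pow_zero, one_smul, map_list_prod, List.map_ofFn] at this
    exact this
  · intro σ _ hσ
    obtain ⟨k, hk⟩ : ∃ k, σ k < k := by
      by_contra hc
      push Not at hc
      exact hσ (perm_eq_one σ hc)
    rw [map_smul, map_list_prod, List.map_ofFn, List.prod_eq_zero, smul_zero]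
    rw [List.mem_ofFn]
    exact ⟨k, z_lower θ q (Nat.add_lt_add_right hk 1)⟩
  · intro h; exact absurd (Finset.mem_univ _) h

theorem diag_unit (θ : ℕ) (q : ℂ) (k : ℕ) (h1 : 1 ≤ k) (h2 : k ≤ θ + 1) :
    IsUnit (z θ q k k) := by
  have hp := diag_prod θ q
  generalize hL : (List.ofFn (fun k : Fin (θ + 1) => z θ q ((k : ℕ) + 1) ((k : ℕ) + 1))) = L at hp
  have hc : ∀ x ∈ L, Commute (z θ q k k) x := by
    intro x hx
    rw [← hL, List.mem_ofFn] at hx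
    obtain ⟨l, rfl⟩ := hx
    exact diag_commute θ q h1 (by omega) h2 (by omega)
  have hm : z θ q k k ∈ L := by
    rw [← hL, List.mem_ofFn]
    refine ⟨⟨k - 1, by omega⟩, ?_⟩
    simp only [Nat.sub_add_cancel h1]
  obtain ⟨s, t, rfl⟩ := List.append_of_mem hm
  have hs : Commute (z θ q k k) s.prod :=
    Commute.list_prod_right _ _ (fun x hx => hc x (by simp [hx]))
  have ht : Commute (z θ q k k) t.prod :=
    Commute.list_prod_right _ _ (fun x hx => hc x (by simp [hx]))
  rw [List.prod_append, List.prod_cons] at hp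
  have e1 : z θ q k k * (s.prod * t.prod) = 1 := by
    rw [← mul_assoc, hs.eq, mul_assoc, hp]
  have e2 : (s.prod * t.prod) * z θ q k k = 1 := by
    rw [← (hs.mul_right ht).eq, e1]
  exact ⟨⟨_, _, e1, e2⟩, rfl⟩

theorem comm_inv {R : Type*} [Ring R] {a b w : R} (h : Commute a b) (h1 : b * w = 1)
    (h2 : w * b = 1) : Commute a w := by
  have := Commute.units_inv_right (u := ⟨b, w, h1, h2⟩) (a := a) h
  exact this

theorem step (θ : ℕ) (q : ℂ) (hq0 : q ≠ 0) (hr : q - q⁻¹ ≠ 0) (w : ℕ → OB θ q)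
    (hw : ∀ k : ℕ, 1 ≤ k → k ≤ θ + 1 → z θ q k k * w k = 1 ∧ w k * z θ q k k = 1)
    (c : ℂ) (i m j : ℕ) (h1 : 1 ≤ i) (h2 : i < m) (h3 : m < j) (h4 : j ≤ θ + 1) :
    (c • (z θ q i m * w m)) * ((-(q - q⁻¹)⁻¹) • (z θ q m j * w j)) -
      q⁻¹ • (((-(q - q⁻¹)⁻¹) • (z θ q m j * w j)) * (c • (z θ q i m * w m)))
      = (-(q⁻¹ * c)) • (z θ q i j * w j) := by
  obtain ⟨a1, a2⟩ := hw m (by omega) (by omega)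
  obtain ⟨b1, b2⟩ := hw j (by omega) (by omega)
  have r1 : w m * z θ q m j = q⁻¹ • (z θ q m j * w m) := by
    have := z_row θ q (i := m) (j := j) (s := m) (by omega) h3 h4 (by omega) (by omega)
    have h : z θ q m j * w m = q • (w m * z θ q m j) := by
      calc z θ q m j * w m = w m * (z θ q m m * z θ q m j) * w m := by
            rw [← mul_assoc, a2, one_mul]
        _ = q • (w m * z θ q m j * (z θ q m m * w m)) := by
            rw [this]; simp only [mul_smul_comm, smul_mul_assoc, mul_assoc]
        _ = _ := by rw [a1, mul_one]
    rw [h, smul_smul, inv_mul_cancel₀ hq0, one_smul]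
  have r2 : z θ q i m * w j = w j * z θ q i m :=
    comm_inv (z_commute θ q h1 (by omega) (by omega) h3 h4) b1 b2
  have r3 : w m * w j = w j * w m :=
    (comm_inv (comm_inv (diag_commute θ q (by omega) (by omega) (by omega) h4) b1 b2).symm
      a1 a2).symm
  have r4 := z_qcomm θ q (i := i) (j := m) (s := m) (t := j) h1 h2 (by omega) (by omega) h3 h4
  have e1 : z θ q i m * w m * (z θ q m j * w j)
      = q⁻¹ • (z θ q i m * z θ q m j * (w m * w j)) := by
    calc _ = z θ q i m * (w m * z θ q m j) * w j := by simp only [mul_assoc]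
      _ = _ := by rw [r1]; simp only [mul_smul_comm, smul_mul_assoc, mul_assoc]
  have e2 : z θ q m j * w j * (z θ q i m * w m)
      = z θ q m j * z θ q i m * (w m * w j) := by
    calc _ = z θ q m j * (w j * z θ q i m) * w m := by simp only [mul_assoc]
      _ = _ := by rw [← r2, r3]; simp only [mul_assoc]
  have e3 : z θ q i m * z θ q m j * (w m * w j) - z θ q m j * z θ q i m * (w m * w j)
      = (q - q⁻¹) • (z θ q i j * w j) := by
    rw [← sub_mul, r4, smul_mul_assoc, mul_assoc, ← mul_assoc (z θ q m m), a1, one_mul]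
  simp only [smul_mul_smul_comm]
  rw [e1, e2]
  have : (-(q⁻¹ * c)) • (z θ q i j * w j)
      = (-(q⁻¹ * c) * (q - q⁻¹)⁻¹) • ((q - q⁻¹) • (z θ q i j * w j)) := by
    rw [smul_smul, mul_assoc, inv_mul_cancel₀ hr, mul_one]
  rw [this, ← e3]
  module

/-- In `𝒪_q(B⁺)` of type `A_θ` each `z_{kk}` is invertible, and the
root vectors defined recursively by `E_{i,i+1} = -(q-q⁻¹)⁻¹ z_{i,i+1} z_{i+1,i+1}⁻¹` and
`E_{i,j} = E_{i,j-1} E_{j-1,j} - q⁻¹ E_{j-1,j} E_{i,j-1}` satisfy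
`E_{i,j} = (-1)^{j-i} q^{i-j+1} (q-q⁻¹)⁻¹ z_{ij} z_{jj}⁻¹`. -/
theorem rootvectors_A (θ : ℕ) (hθ : 1 ≤ θ) (q : ℂ) (hq0 : q ≠ 0) (hq1 : q ≠ 1)
    (hqm1 : q ≠ -1) :
    (∀ k : ℕ, 1 ≤ k → k ≤ θ + 1 → IsUnit (z θ q k k)) ∧
    (∀ w : ℕ → OB θ q,
      (∀ k : ℕ, 1 ≤ k → k ≤ θ + 1 → z θ q k k * w k = 1 ∧ w k * z θ q k k = 1) →
      ∀ E : ℕ → ℕ → OB θ q,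
        (∀ i : ℕ, 1 ≤ i → i ≤ θ →
          E i (i + 1) = (-(q - q⁻¹)⁻¹) • (z θ q i (i + 1) * w (i + 1))) →
        (∀ i j : ℕ, 1 ≤ i → i + 2 ≤ j → j ≤ θ + 1 →
          E i j = E i (j - 1) * E (j - 1) j - q⁻¹ • (E (j - 1) j * E i (j - 1))) →
        ∀ i j : ℕ, 1 ≤ i → i < j → j ≤ θ + 1 →
          E i j = ((-1 : ℂ) ^ (j - i) * q ^ ((i : ℤ) - (j : ℤ) + 1) * (q - q⁻¹)⁻¹) •
            (z θ q i j * w j)) := by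
  refine ⟨fun k h1 h2 => diag_unit θ q k h1 h2, ?_⟩
  intro w hw E hE1 hE2 i j h1 h2 h3
  have hr : q - q⁻¹ ≠ 0 := by
    intro h
    have h' : (q - 1) * (q + 1) = 0 := by
      have : q * (q - q⁻¹) = 0 := by rw [h, mul_zero]
      rw [mul_sub, mul_inv_cancel₀ hq0] at this
      linear_combination this
    rcases mul_eq_zero.1 h' with h' | h'
    · exact hq1 (sub_eq_zero.1 h')
    · exact hqm1 (eq_neg_of_add_eq_zero_left h')
  induction j, (show i + 1 ≤ j from h2) using Nat.le_induction with
  | base =>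
    rw [hE1 i h1 (by omega)]
    congr 1
    have e : (i : ℤ) - ((i + 1 : ℕ) : ℤ) + 1 = 0 := by push_cast; ring
    rw [e, Nat.add_sub_cancel_left]
    simp
  | succ j hj ih =>
    rw [hE2 i (j + 1) h1 (by omega) h3, Nat.add_sub_cancel, ih (by omega) (by omega),
      hE1 j (by omega) (by omega), step θ q hq0 hr w hw _ i j (j + 1) h1 (by omega) (by omega) h3]
    congr 1
    have e : (i : ℤ) - ((j + 1 : ℕ) : ℤ) + 1 = ((i : ℤ) - (j : ℤ) + 1) - 1 := by push_cast; ring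
    rw [e, zpow_sub_one₀ hq0, Nat.succ_sub (by omega), pow_succ]
    ring

end SLq
end
end

section
/- Assume q ∉ {0, 1, −1} and n = 2θ+1 with θ ≥ 2, so k' = 2θ+2−k. In 𝒪_q(B⁺) define e_i := q^{2−δ_{i,θ}} (q − q^{−1})^{−1} z_{i'−1, i'} z_{ii} for 1 ≤ i ≤ θ, and, for 1 ≤ i ≤ θ and i < j ≤ i'−1, define E_{ij} recursively by: E_{i,i+1} := e_i; E_{ij} := e_{j−1} E_{i,j−1} − q^{−1} E_{i,j−1} e_{j−1} for i+1 < j ≤ θ+1; and E_{ij} := e_{j'} E_{i,j−1} − q^{−1+δ_{j,θ+2}} E_{i,j−1} e_{j'} for θ+1 < j ≤ i'−1. Then E_{ij} = λ_{ij} z_{j'i'} z_{ii} for all such i, j, where λ_{ij} := q^{j−i+1−δ_{j,θ+1}} (q − q^{−1})^{−1} for 1 ≤ i < j ≤ θ+1 and λ_{ij} := (−1)^{θ+1−j} v^{2(j−i)−1} (q − q^{−1})^{−1} for θ+1 < j ≤ i'−1. (These are the images ψ(E_{ij}) of the B_θ root vectors under the isomorphism ψ : U_{q^{1/2}}^Q(𝔟⁺)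 → 𝒪_q(B⁺).) -/
noncomputable section
open scoped TensorProduct

namespace SOq

/-- The scalars `λ_{ij}` for type `B_θ` (with 1-based indices); `q^{1/2} := v`. -/
def lamB (θ : ℕ) (q v : ℂ) (i j : ℕ) : ℂ :=
  if j ≤ θ + 1 then
    q ^ (j - i + 1 - (if j = θ + 1 then 1 else 0)) * (q - q⁻¹)⁻¹
  else
    (-1 : ℂ) ^ (j - θ - 1) * v ^ (2 * (j - i) - 1) * (q - q⁻¹)⁻¹

/-- The relations we use, for a family in an arbitrary algebra. -/
structure Good_s16 (n : ℕ) (q v : ℂ) {A : Type} [Ring A] [Algebra ℂ A] (Z : ℕ → ℕ → A) : Prop where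
  low : ∀ i j : ℕ, j < i → Z i j = 0
  frt : ∀ i b j a : ℕ, i ∈ Finset.Icc 1 n → b ∈ Finset.Icc 1 n → j ∈ Finset.Icc 1 n →
      a ∈ Finset.Icc 1 n → ∑ k ∈ Finset.Icc 1 n, ∑ l ∈ Finset.Icc 1 n,
    (Rc n q v l k a b • (Z i k * Z j l) - Rc n q v j i k l • (Z k a * Z l b)) = 0
  orth : ∀ i j : ℕ, i ∈ Finset.Icc 1 n → j ∈ Finset.Icc 1 n →
    (∑ k ∈ Finset.Icc 1 n, ∑ l ∈ Finset.Icc 1 n, ∑ m ∈ Finset.Icc 1 n,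
      (Jc n v k l * Jc n v m j) • (Z i k * Z m l)) - (if i = j then (1 : A) else 0) = 0

lemma good_z (n : ℕ) (q v : ℂ) : Good_s16 n q v (z n q v) := by
  constructor
  · intro i j h
    have := RingQuot.mkAlgHom_rel ℂ (Rel.lower (n := n) (q := q) (v := v) i j h)
    rw [map_zero] at this
    exact this
  · intro i b j a hi hb hj ha
    have h := RingQuot.mkAlgHom_rel ℂ (Rel.frt (n := n) (q := q) (v := v) i b j a hi hb hj ha)
    simp only [frtRel, map_sum, map_sub, map_smul, map_mul, map_zero] at h
    exact h
  · intro i j hi hj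
    have h := RingQuot.mkAlgHom_rel ℂ (Rel.orth₁ (n := n) (q := q) (v := v) i j hi hj)
    simp only [orthRel₁, map_sum, map_sub, map_smul, map_mul, map_zero] at h
    have h2 : (RingQuot.mkAlgHom ℂ (Rel n q v)) (if i = j then (1 : FA) else 0) =
      (if i = j then 1 else 0) := by split_ifs <;> simp
    rw [h2] at h
    exact h

lemma frt_gen {A : Type} [Ring A] [Algebra ℂ A] (Z : ℕ → ℕ → A) (n : ℕ) (q v : ℂ)
    (hZ : Good_s16 n q v Z) (i b j a : ℕ) (hi : i ∈ Finset.Icc 1 n)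
    (hb : b ∈ Finset.Icc 1 n) (hj : j ∈ Finset.Icc 1 n) (ha : a ∈ Finset.Icc 1 n) :
    (q ^ (((if a = b then 1 else 0) - (if a = pr n b then 1 else 0) : ℤ))) •
        (Z i b * Z j a)
      + ((if a < b then (1 : ℂ) else 0) * (q - q⁻¹)) • (Z i a * Z j b)
      - ∑ k ∈ Finset.Icc 1 n, ∑ l ∈ Finset.Icc 1 n,
        ((if a < l then (1 : ℂ) else 0) * (q - q⁻¹) * (Jc n v k l * Jc n v a b)) •
          (Z i k * Z j l)
    = (q ^ (((if j = i then 1 else 0) - (if j = pr n i then 1 else 0) : ℤ))) •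
        (Z j a * Z i b)
      + ((if i < j then (1 : ℂ) else 0) * (q - q⁻¹)) • (Z i a * Z j b)
      - ∑ k ∈ Finset.Icc 1 n, ∑ l ∈ Finset.Icc 1 n,
        ((if k < j then (1 : ℂ) else 0) * (q - q⁻¹) * (Jc n v i j * Jc n v k l)) •
          (Z k a * Z l b) := by
  have h1 := hZ.frt i b j a hi hb hj ha
  simp only [Finset.sum_sub_distrib] at h1
  rw [sub_eq_zero] at h1
  have e1 : ∀ k l, Rc n q v l k a b • (Z i k * Z j l) =
      (if l = a then (if k = b then
        (q ^ (((if a = b then 1 else 0) - (if a = pr n b then 1 else 0) : ℤ))) •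
        (Z i b * Z j a) else 0) else 0)
      + (if l = b then (if k = a then
        ((if a < b then (1 : ℂ) else 0) * (q - q⁻¹)) • (Z i a * Z j b) else 0) else 0)
      - ((if a < l then (1 : ℂ) else 0) * (q - q⁻¹) * (Jc n v k l * Jc n v a b)) •
          (Z i k * Z j l) := by
    intro k l
    have : Rc n q v l k a b =
      (if l = a then (if k = b then
        (q ^ (((if a = b then 1 else 0) - (if a = pr n b then 1 else 0) : ℤ))) else 0) else 0)
      + (if l = b then (if k = a then
        ((if a < b then (1 : ℂ) else 0) * (q - q⁻¹)) else 0) else 0)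
      - ((if a < l then (1 : ℂ) else 0) * (q - q⁻¹) * (Jc n v k l * Jc n v a b)) := by
      unfold Rc
      rw [mul_sub, ← add_sub_assoc]
      congr 2
      · by_cases h1 : l = a <;> by_cases h2 : k = b <;> simp [h1, h2]
      · by_cases h1 : l = b <;> by_cases h2 : k = a <;> simp [h1, h2]
    rw [this, sub_smul, add_smul]
    congr 2
    · by_cases h1 : l = a <;> by_cases h2 : k = b <;> simp [h1, h2]
    · by_cases h1 : l = b <;> by_cases h2 : k = a <;> simp [h1, h2]
  have e2 : ∀ k l, Rc n q v j i k l • (Z k a * Z l b) =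
      (if k = j then (if l = i then
        (q ^ (((if j = i then 1 else 0) - (if j = pr n i then 1 else 0) : ℤ))) •
        (Z j a * Z i b) else 0) else 0)
      + (if k = i then (if l = j then
        ((if i < j then (1 : ℂ) else 0) * (q - q⁻¹)) • (Z i a * Z j b) else 0) else 0)
      - ((if k < j then (1 : ℂ) else 0) * (q - q⁻¹) * (Jc n v i j * Jc n v k l)) •
          (Z k a * Z l b) := by
    intro k l
    have : Rc n q v j i k l =
      (if k = j then (if l = i then
        (q ^ (((if j = i then 1 else 0) - (if j = pr n i then 1 else 0) : ℤ))) else 0) else 0)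
      + (if k = i then (if l = j then
        ((if i < j then (1 : ℂ) else 0) * (q - q⁻¹)) else 0) else 0)
      - ((if k < j then (1 : ℂ) else 0) * (q - q⁻¹) * (Jc n v i j * Jc n v k l)) := by
      unfold Rc
      simp only [eq_comm (a := j) (b := k), eq_comm (a := i) (b := l), eq_comm (a := i) (b := k),
        eq_comm (a := j) (b := l)]
      rw [mul_sub, ← add_sub_assoc]
      congr 2
      · by_cases h1 : k = j <;> by_cases h2 : l = i <;> simp [h1, h2]
      · by_cases h1 : k = i <;> by_cases h2 : l = j <;> simp [h1, h2]
    rw [this, sub_smul, add_smul]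
    congr 2
    · by_cases h1 : k = j <;> by_cases h2 : l = i <;> simp [h1, h2]
    · by_cases h1 : k = i <;> by_cases h2 : l = j <;> simp [h1, h2]
  have d1 : ∀ (x y : ℕ) (w : A), x ∈ Finset.Icc 1 n → y ∈ Finset.Icc 1 n →
      ∑ k ∈ Finset.Icc 1 n, ∑ l ∈ Finset.Icc 1 n,
        (if l = x then (if k = y then w else 0) else 0) = w := by
    intro x y w hx hy
    rw [Finset.sum_eq_single y, Finset.sum_eq_single x]
    · simp
    · intro c _ hc; simp [hc]
    · intro hc; exact absurd hx hc
    · intro c _ hc; simp [hc]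
    · intro hc; exact absurd hy hc
  have d2 : ∀ (x y : ℕ) (w : A), x ∈ Finset.Icc 1 n → y ∈ Finset.Icc 1 n →
      ∑ k ∈ Finset.Icc 1 n, ∑ l ∈ Finset.Icc 1 n,
        (if k = x then (if l = y then w else 0) else 0) = w := by
    intro x y w hx hy
    rw [Finset.sum_comm]
    exact d1 x y w hx hy
  simp only [e1, e2, Finset.sum_sub_distrib, Finset.sum_add_distrib] at h1
  rw [d1 _ _ _ ha hb, d1 _ _ _ hb ha, d2 _ _ _ hj hi, d2 _ _ _ hi hj] at h1
  exact h1

lemma tor {A : Type} [Ring A] [Algebra ℂ A] (Z : ℕ → ℕ → A) (n : ℕ) (q v : ℂ)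
    (hZ : Good_s16 n q v Z) (_ : q ≠ 0) (k x y : ℕ) (hk : k ∈ Finset.Icc 1 n)
    (hx : x ∈ Finset.Icc 1 n) (hy : y ∈ Finset.Icc 1 n) :
    (q ^ (((if y = k then 1 else 0) - (if y = pr n k then 1 else 0) : ℤ))) •
        (Z k k * Z x y)
    = (q ^ (((if x = k then 1 else 0) - (if x = pr n k then 1 else 0) : ℤ))) •
        (Z x y * Z k k) := by
  have h := frt_gen Z n q v hZ k k x y hk hk hx hy
  have s1 : ∑ k_1 ∈ Finset.Icc 1 n, ∑ l ∈ Finset.Icc 1 n,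
        ((if y < l then (1 : ℂ) else 0) * (q - q⁻¹) * (Jc n v k_1 l * Jc n v y k)) •
          (Z k k_1 * Z x l) = 0 := by
    refine Finset.sum_eq_zero fun p hp => Finset.sum_eq_zero fun l hl => ?_
    simp only [Finset.mem_Icc] at *
    by_cases h1 : y < l
    · by_cases h2 : l = pr n p
      · by_cases h3 : k = pr n y
        · rw [hZ.low k p (by unfold pr at *; omega)]; simp
        · simp [Jc, h3]
      · simp [Jc, h2]
    · simp [h1]
  have s2 : ∑ p ∈ Finset.Icc 1 n, ∑ l ∈ Finset.Icc 1 n,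
        ((if p < x then (1 : ℂ) else 0) * (q - q⁻¹) * (Jc n v k x * Jc n v p l)) •
          (Z p y * Z l k) = 0 := by
    refine Finset.sum_eq_zero fun p hp => Finset.sum_eq_zero fun l hl => ?_
    simp only [Finset.mem_Icc] at *
    by_cases h1 : p < x
    · by_cases h2 : l = pr n p
      · by_cases h3 : x = pr n k
        · rw [hZ.low l k (by unfold pr at *; omega)]; simp
        · simp [Jc, h3]
      · simp [Jc, h2]
    · simp [h1]
  have s3 : ((if y < k then (1 : ℂ) else 0) * (q - q⁻¹)) • (Z k y * Z x k) = 0 := by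
    by_cases h1 : y < k
    · rw [hZ.low k y h1]; simp
    · simp [h1]
  have s4 : ((if k < x then (1 : ℂ) else 0) * (q - q⁻¹)) • (Z k y * Z x k) = 0 := by
    by_cases h1 : k < x
    · rw [hZ.low x k h1]; simp
    · simp [h1]
  rw [s1, s2, s3, s4] at h
  simpa using h

lemma Jc_mul (n : ℕ) (v : ℂ) (hv : v ≠ 0) (i : ℕ) (hi : i ∈ Finset.Icc 1 n) :
    Jc n v i (pr n i) * Jc n v (pr n i) i = 1 := by
  simp only [Finset.mem_Icc] at hi
  have : pr n (pr n i) = i := by unfold pr; omega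
  simp only [Jc, this, if_true]
  rw [← zpow_add₀ hv]
  have : -(twoRho n i) + -(twoRho n (pr n i)) = 0 := by
    unfold twoRho pr; split_ifs <;> omega
  rw [this, zpow_zero]

lemma diag {A : Type} [Ring A] [Algebra ℂ A] (Z : ℕ → ℕ → A) (n : ℕ) (q v : ℂ)
    (hZ : Good_s16 n q v Z) (hv : v ≠ 0) (i : ℕ) (hi : i ∈ Finset.Icc 1 n) :
    Z i i * Z (pr n i) (pr n i) = 1 := by
  have h1 := hZ.orth i i hi hi
  rw [if_pos rfl, sub_eq_zero] at h1
  have hi' : pr n i ∈ Finset.Icc 1 n := by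
    simp only [Finset.mem_Icc, pr] at *; omega
  have key : ∀ k ∈ Finset.Icc 1 n, ∀ l ∈ Finset.Icc 1 n, ∀ m ∈ Finset.Icc 1 n,
      ¬ (k = i ∧ l = pr n i ∧ m = pr n i) →
      (Jc n v k l * Jc n v m i) • (Z i k * Z m l) = 0 := by
    intro k hk l hl m hm hne
    simp only [Finset.mem_Icc] at *
    by_cases h2 : l = pr n k
    · by_cases h3 : i = pr n m
      · by_cases h4 : k < i
        · rw [hZ.low i k h4]; simp
        · rw [hZ.low m l (by unfold pr at *; omega)]; simp
      · simp [Jc, h3]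
    · simp [Jc, h2]
  rw [Finset.sum_eq_single_of_mem i hi, Finset.sum_eq_single_of_mem _ hi',
    Finset.sum_eq_single_of_mem _ hi', Jc_mul n v hv i hi, one_smul] at h1
  · exact h1
  · intro m hm hne; exact key _ hi _ hi' _ hm (by tauto)
  · intro l hl hne
    exact Finset.sum_eq_zero fun m hm => key _ hi _ hl _ hm (by tauto)
  · intro k hk hne
    exact Finset.sum_eq_zero fun l hl => Finset.sum_eq_zero fun m hm =>
      key _ hk _ hl _ hm (by tauto)

lemma comm1 {A : Type} [Ring A] [Algebra ℂ A] (Z : ℕ → ℕ → A) (n : ℕ) (q v : ℂ)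
    (hZ : Good_s16 n q v Z) (r s t : ℕ) (hr1 : 1 ≤ r) (hrs : r < s)
    (hst : s < t) (htn : t ≤ n) (h1 : t ≠ pr n s) (h2 : s ≠ pr n r) :
    Z r s * Z s t = Z s t * Z r s +
      (q - q⁻¹) • (Z r t * Z s s) := by
  have h := frt_gen Z n q v hZ r s s t (by simp; omega) (by simp; omega) (by simp; omega)
    (by simp; omega)
  have h1' : s ≠ pr n t := by unfold pr at *; omega
  simpa [h1, h2, h1', Jc, hrs, hst.ne', hrs.ne', hst.not_gt] using h

lemma comm2 {A : Type} [Ring A] [Algebra ℂ A] (Z : ℕ → ℕ → A) (n : ℕ) (q v : ℂ)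
    (hZ : Good_s16 n q v Z) (m t : ℕ) (hm : 1 ≤ m) (hmn : 2 * m < n)
    (ht : pr n m < t) (htn : t ≤ n) :
    Z (pr n (m+1)) (pr n m) * Z (m+1) t =
      (q ^ (((if m + 1 = pr n (m+1) then 1 else 0) - 1 : ℤ))) •
        (Z (m+1) t * Z (pr n (m+1)) (pr n m)) -
      ((q - q⁻¹) * (Jc n v (pr n (m+1)) (m+1) * Jc n v m (pr n m))) •
        (Z m t * Z (pr n m) (pr n m)) := by
  have h := frt_gen Z n q v hZ (pr n (m+1)) (pr n m) (m+1) t (by simp [pr]; omega)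
    (by simp [pr]; omega) (by simp; omega) (by unfold pr at ht; simp; omega)
  have a1 : t ≠ pr n m := ht.ne'
  have a2 : t ≠ pr n (pr n m) := by unfold pr at *; omega
  have a3 : ¬ t < pr n m := ht.not_gt
  have a4 : m + 1 = pr n (pr n (m+1)) := by unfold pr at *; omega
  have a5 : ¬ (pr n (m+1) < m+1) := by unfold pr at *; omega
  have a6 : Jc n v t (pr n m) = 0 := by
    unfold Jc; rw [if_neg]; unfold pr at *; omega
  have s2 : ∑ k ∈ Finset.Icc 1 n, ∑ l ∈ Finset.Icc 1 n,
        ((if k < m+1 then (1 : ℂ) else 0) * (q - q⁻¹) *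
          (Jc n v (pr n (m+1)) (m+1) * Jc n v k l)) •
          (Z k t * Z l (pr n m)) =
      ((q - q⁻¹) * (Jc n v (pr n (m+1)) (m+1) * Jc n v m (pr n m))) •
        (Z m t * Z (pr n m) (pr n m)) := by
    have key : ∀ k ∈ Finset.Icc 1 n, ∀ l ∈ Finset.Icc 1 n, ¬ (k = m ∧ l = pr n m) →
        ((if k < m+1 then (1 : ℂ) else 0) * (q - q⁻¹) *
          (Jc n v (pr n (m+1)) (m+1) * Jc n v k l)) •
          (Z k t * Z l (pr n m)) = 0 := by
      intro k hk l hl hne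
      simp only [Finset.mem_Icc] at *
      by_cases h1 : k < m + 1
      · by_cases h2 : l = pr n k
        · rw [hZ.low l (pr n m) (by unfold pr at *; omega)]; simp
        · simp [Jc, h2]
      · simp [h1]
    rw [Finset.sum_eq_single_of_mem m (by simp; omega),
      Finset.sum_eq_single_of_mem (pr n m) (by simp [pr]; omega)]
    · simp
    · intro l hl hne; exact key _ (by simp; omega) _ hl (by tauto)
    · intro k hk hne
      exact Finset.sum_eq_zero fun l hl => key _ hk _ hl (by tauto)
  rw [s2] at h
  simpa only [a1, a2, a3, ← a4, a5, a6, if_true, if_false, mul_zero, zero_mul, zero_smul,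
    Finset.sum_const_zero, add_zero, sub_zero, sub_self, zpow_zero, one_smul] using h

lemma step1 {A : Type} [Ring A] [Algebra ℂ A] (Z : ℕ → ℕ → A) (n : ℕ) (q v : ℂ)
    (hZ : Good_s16 n q v Z) (hq0 : q ≠ 0) (hv : v ≠ 0) (i m : ℕ) (hi : 1 ≤ i) (him : i < m)
    (hm : 2 * m < n) :
    (Z (pr n m - 1) (pr n m) * Z m m) * (Z (pr n m) (pr n i) * Z i i)
      - q⁻¹ • ((Z (pr n m) (pr n i) * Z i i) *
        (Z (pr n m - 1) (pr n m) * Z m m)) =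
    (q⁻¹ * (q - q⁻¹)) • (Z (pr n m - 1) (pr n i) * Z i i) := by
  have hM : m ∈ Finset.Icc 1 n := by simp; omega
  have hI : i ∈ Finset.Icc 1 n := by simp; omega
  have c := comm1 Z n q v hZ (pr n m - 1) (pr n m) (pr n i) (by unfold pr; omega)
    (by unfold pr; omega) (by unfold pr; omega) (by unfold pr; omega)
    (by unfold pr; omega) (by unfold pr; omega)
  have t1 := tor Z n q v hZ hq0 m (pr n m) (pr n i) hM (by simp [pr]; omega) (by simp [pr]; omega)
  rw [if_neg (by first | omega | (unfold pr; omega)), if_neg (by first | omega | (unfold pr; omega)), if_neg (by first | omega | (unfold pr; omega)),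
    if_pos rfl] at t1
  have t2 := tor Z n q v hZ hq0 i (pr n m - 1) (pr n m) hI (by simp [pr]; omega) (by simp [pr]; omega)
  rw [if_neg (by first | omega | (unfold pr; omega)), if_neg (by first | omega | (unfold pr; omega)), if_neg (by first | omega | (unfold pr; omega)),
    if_neg (by first | omega | (unfold pr; omega))] at t2
  have t3 := tor Z n q v hZ hq0 i m m hI hM hM
  rw [if_neg (by omega), if_neg (by first | omega | (unfold pr; omega))] at t3
  have t4 := diag Z n q v hZ hv (pr n m) (by simp [pr]; omega)
  rw [show pr n (pr n m) = m by unfold pr; omega] at t4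
  simp only [sub_self, zero_sub, zpow_zero, one_smul, zpow_neg, zpow_one] at t1 t2 t3
  generalize Z (pr n m - 1) (pr n m) = a at *
  generalize Z (pr n m) (pr n i) = b at *
  generalize Z (pr n m - 1) (pr n i) = d at *
  generalize Z (pr n m) (pr n m) = f at *
  generalize Z m m = g at *
  generalize Z i i = h at *
  have l1 : (a * g) * (b * h) = q⁻¹ • (a * b * g * h) := by
    rw [show (a * g) * (b * h) = a * (g * b) * h by noncomm_ring, t1]
    simp [mul_assoc]
  have l2 : (b * h) * (a * g) = b * a * g * h := by
    rw [show (b * h) * (a * g) = b * (h * a) * g by noncomm_ring, t2,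
      show b * (a * h) * g = b * a * (h * g) by noncomm_ring, t3]
    noncomm_ring
  have l3 : d * f * g * h = d * h := by
    rw [mul_assoc d f g, t4, mul_one]
  rw [l1, l2, c, ← smul_sub, mul_smul]
  congr 1
  simp only [add_mul, smul_mul_assoc, l3]
  abel

lemma step2 {A : Type} [Ring A] [Algebra ℂ A] (Z : ℕ → ℕ → A) (n : ℕ) (q v : ℂ)
    (hZ : Good_s16 n q v Z) (hq0 : q ≠ 0) (hv : v ≠ 0) (i m : ℕ) (hi : 1 ≤ i) (him : i < m)
    (hm : 2 * m < n) :
    (Z (pr n m - 1) (pr n m) * Z m m) * (Z (m+1) (pr n i) * Z i i)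
      - (q ^ (((if m + 1 = pr n (m+1) then 1 else 0) - 1 : ℤ))) •
        ((Z (m+1) (pr n i) * Z i i) *
        (Z (pr n m - 1) (pr n m) * Z m m)) =
    (-((q - q⁻¹) * (Jc n v (pr n (m+1)) (m+1) * Jc n v m (pr n m)))) •
      (Z m (pr n i) * Z i i) := by
  have hM : m ∈ Finset.Icc 1 n := by simp; omega
  have hI : i ∈ Finset.Icc 1 n := by simp; omega
  have c := comm2 Z n q v hZ m (pr n i) (by omega) hm (by unfold pr; omega) (by unfold pr; omega)
  rw [show pr n (m+1) = pr n m - 1 by unfold pr; omega] at *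
  have t1 := tor Z n q v hZ hq0 m (m+1) (pr n i) hM (by simp; omega) (by simp [pr]; omega)
  rw [if_neg (by first | omega | (unfold pr; omega)), if_neg (by first | omega | (unfold pr; omega)), if_neg (by first | omega | (unfold pr; omega)),
    if_neg (by first | omega | (unfold pr; omega))] at t1
  have t2 := tor Z n q v hZ hq0 i (pr n m - 1) (pr n m) hI (by simp [pr]; omega) (by simp [pr]; omega)
  rw [if_neg (by first | omega | (unfold pr; omega)), if_neg (by first | omega | (unfold pr; omega)), if_neg (by first | omega | (unfold pr; omega)),
    if_neg (by first | omega | (unfold pr; omega))] at t2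
  have t3 := tor Z n q v hZ hq0 i m m hI hM hM
  rw [if_neg (by omega), if_neg (by first | omega | (unfold pr; omega))] at t3
  have t4 := diag Z n q v hZ hv (pr n m) (by simp [pr]; omega)
  rw [show pr n (pr n m) = m by unfold pr; omega] at t4
  simp only [sub_self, zpow_zero, one_smul] at t1 t2 t3
  generalize Z (pr n m - 1) (pr n m) = a at *
  generalize Z (m+1) (pr n i) = b at *
  generalize Z m (pr n i) = d at *
  generalize Z (pr n m) (pr n m) = f at *
  generalize Z m m = g at *
  generalize Z i i = h at *
  have l1 : (a * g) * (b * h) = (a * b * g * h) := by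
    rw [show (a * g) * (b * h) = a * (g * b) * h by noncomm_ring, t1]
    simp [mul_assoc]
  have l2 : (b * h) * (a * g) = b * a * g * h := by
    rw [show (b * h) * (a * g) = b * (h * a) * g by noncomm_ring, t2,
      show b * (a * h) * g = b * a * (h * g) by noncomm_ring, t3]
    noncomm_ring
  have l3 : d * f * g * h = d * h := by
    rw [mul_assoc d f g, t4, mul_one]
  rw [l1, l2, c, neg_smul]
  simp only [sub_mul, smul_mul_assoc, l3]
  abel

lemma Jprod (θ : ℕ) (v : ℂ) (hv : v ≠ 0) (m : ℕ) (hm : m ≤ θ) (hm1 : 1 ≤ m) :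
    Jc (2*θ+1) v (pr (2*θ+1) (m+1)) (m+1) * Jc (2*θ+1) v m (pr (2*θ+1) m) =
      v ^ ((if m = θ then -1 else -2 : ℤ)) := by
  have : m + 1 = pr (2*θ+1) (pr (2*θ+1) (m+1)) := by unfold pr; omega
  unfold Jc
  rw [if_pos this, if_pos rfl, ← zpow_add₀ hv]
  congr 1
  unfold twoRho pr; split_ifs <;> omega

theorem main_gen {A : Type} [Ring A] [Algebra ℂ A] (Z : ℕ → ℕ → A) (θ : ℕ) (hθ : 2 ≤ θ) (q v : ℂ) (hq0 : q ≠ 0) (hq1 : q ≠ 1)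
    (hqm1 : q ≠ -1) (hv : v ^ 2 = q)
    (hZ : Good_s16 (2 * θ + 1) q v Z) (e : ℕ → A) (E : ℕ → ℕ → A)
    (he : ∀ i : ℕ, 1 ≤ i → i ≤ θ →
      e i = (q ^ (2 - (if i = θ then 1 else 0)) * (q - q⁻¹)⁻¹) •
        (Z (pr (2 * θ + 1) i - 1) (pr (2 * θ + 1) i) *
          Z i i))
    (hE0 : ∀ i : ℕ, 1 ≤ i → i ≤ θ → E i (i + 1) = e i)
    (hE1 : ∀ i j : ℕ, 1 ≤ i → i + 1 < j → j ≤ θ + 1 →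
      E i j = e (j - 1) * E i (j - 1) - q⁻¹ • (E i (j - 1) * e (j - 1)))
    (hE2 : ∀ i j : ℕ, 1 ≤ i → θ + 1 < j → j ≤ pr (2 * θ + 1) i - 1 →
      E i j = e (pr (2 * θ + 1) j) * E i (j - 1) -
        (q ^ ((-1 : ℤ) + (if j = θ + 2 then 1 else 0))) •
          (E i (j - 1) * e (pr (2 * θ + 1) j))) :
    ∀ i j : ℕ, 1 ≤ i → i ≤ θ → i < j → j ≤ pr (2 * θ + 1) i - 1 →
      E i j = lamB θ q v i j •
        (Z (pr (2 * θ + 1) j) (pr (2 * θ + 1) i) * Z i i) := by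
  have hv0 : v ≠ 0 := by
    rintro rfl; apply hq0; rw [← hv]; simp
  have hd : q - q⁻¹ ≠ 0 := by
    intro h
    have h2 : q * q = 1 := by
      rw [sub_eq_zero] at h
      nth_rewrite 2 [h]; exact mul_inv_cancel₀ hq0
    rcases mul_self_eq_one_iff.mp h2 with h3 | h3
    · exact hq1 h3
    · exact hqm1 h3
  intro i j hi hiθ hij
  induction j, (show i + 1 ≤ j from hij) using Nat.le_induction with
  | base =>
    intro _
    rw [hE0 i hi hiθ, he i hi hiθ]
    have h1 : lamB θ q v i (i+1) = q ^ (2 - (if i = θ then 1 else 0)) * (q - q⁻¹)⁻¹ := by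
      unfold lamB
      rw [if_pos (by omega)]
      simp only [Nat.add_right_cancel_iff, Nat.add_sub_cancel_left]
    rw [h1, show pr (2*θ+1) (i+1) = pr (2*θ+1) i - 1 by unfold pr; omega]
  | succ j hj ih =>
    intro hj2
    have ih := ih (by omega) (by omega)
    by_cases hc : j ≤ θ
    · rw [hE1 i (j+1) hi (by omega) (by omega), Nat.add_sub_cancel, ih, he j (by omega) hc]
      have s := step1 Z (2*θ+1) q v hZ hq0 hv0 i j hi (by omega) (by omega)
      rw [show pr (2*θ+1) (j+1) = pr (2*θ+1) j - 1 by unfold pr; omega]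
      simp only [smul_mul_smul_comm]
      rw [mul_comm (lamB θ q v i j), smul_comm q⁻¹, ← smul_sub, s, smul_smul]
      congr 1
      unfold lamB
      rw [if_pos (show j ≤ θ + 1 by omega), if_pos (show j + 1 ≤ θ + 1 by omega),
        if_neg (show ¬ j = θ + 1 by omega)]
      obtain ⟨d, rfl⟩ : ∃ d, j = i + d := ⟨j - i, by omega⟩
      have e1 : i + d - i + 1 - 0 = d + 1 := by omega
      by_cases h : i + d = θ
      · rw [if_pos h, if_pos (by omega), e1,
          show i + d + 1 - i + 1 - 1 = d + 1 by omega]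
        field_simp
        norm_num
      · rw [if_neg h, if_neg (by omega), e1,
          show i + d + 1 - i + 1 - 0 = d + 2 by omega]
        field_simp
        try ring
    · obtain ⟨m, hm⟩ : ∃ m, m = pr (2*θ+1) (j+1) := ⟨_, rfl⟩
      have hj3 : j = 2 * θ + 1 - m := by unfold pr at *; omega
      have hm1 : i < m := by unfold pr at *; omega
      have hm2 : m ≤ θ := by unfold pr at *; omega
      rw [hE2 i (j+1) hi (by omega) hj2, Nat.add_sub_cancel, ih, ← hm, he m (by omega) hm2]
      have s := step2 Z (2*θ+1) q v hZ hq0 hv0 i m hi hm1 (by omega)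
      rw [Jprod θ v hv0 m hm2 (by omega)] at s
      rw [show pr (2*θ+1) j = m + 1 by unfold pr; omega]
      have hx : ((-1 : ℤ) + (if j + 1 = θ + 2 then 1 else 0)) =
          (if m + 1 = pr (2*θ+1) (m+1) then 1 else 0) - 1 := by
        unfold pr; split_ifs <;> omega
      rw [hx]
      simp only [smul_mul_smul_comm]
      rw [mul_comm (lamB θ q v i j), smul_comm (q ^ (_ : ℤ)), ← smul_sub, s, smul_smul]
      congr 1
      unfold lamB
      obtain ⟨d, hd'⟩ : ∃ d, j = i + d := ⟨j - i, by omega⟩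
      rw [if_neg (show ¬ j + 1 ≤ θ + 1 by omega)]
      by_cases h : m = θ
      · have hjθ : j = θ + 1 := by omega
        rw [if_pos h, if_pos h, if_pos (by omega), if_pos hjθ,
          show j - i + 1 - 1 = d by omega, show j + 1 - θ - 1 = 1 by omega,
          show 2 * (j + 1 - i) - 1 = 2 * d + 1 by omega, pow_add, pow_mul, hv, zpow_neg_one]
        have : q = v * v := by rw [← hv, sq]
        field_simp
        rw [hv]
        try ring
      · obtain ⟨c, hc'⟩ : ∃ c, j = θ + 1 + c + 1 := ⟨j - θ - 2, by omega⟩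
        obtain ⟨d', rfl⟩ : ∃ d', d = d' + 1 := ⟨d - 1, by omega⟩
        rw [if_neg h, if_neg h, if_neg (by omega),
          show j - θ - 1 = c + 1 by omega, show j + 1 - θ - 1 = c + 2 by omega,
          show 2 * (j + 1 - i) - 1 = 2 * d' + 3 by omega,
          show 2 * (j - i) - 1 = 2 * d' + 1 by omega, 
          show (v ^ (-2 : ℤ)) = q⁻¹ by rw [zpow_neg, ← hv]; norm_cast,
          show v ^ (2 * d' + 3) = v ^ (2 * d' + 1) * q by rw [← hv]; ring]
        field_simp
        try ring

/-- The images of the `B_θ` root vectors in `𝒪_q(B⁺) ⊆ 𝒪_q(SO_{2θ+1})`: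
the recursively defined `E_{ij}` equal `λ_{ij} z_{j'i'} z_{ii}`. -/
theorem rootvectors_B (θ : ℕ) (hθ : 2 ≤ θ) (q v : ℂ) (hq0 : q ≠ 0) (hq1 : q ≠ 1)
    (hqm1 : q ≠ -1) (hv : v ^ 2 = q)
    (e : ℕ → OB (2 * θ + 1) q v) (E : ℕ → ℕ → OB (2 * θ + 1) q v)
    (he : ∀ i : ℕ, 1 ≤ i → i ≤ θ →
      e i = (q ^ (2 - (if i = θ then 1 else 0)) * (q - q⁻¹)⁻¹) •
        (z (2 * θ + 1) q v (pr (2 * θ + 1) i - 1) (pr (2 * θ + 1) i) *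
          z (2 * θ + 1) q v i i))
    (hE0 : ∀ i : ℕ, 1 ≤ i → i ≤ θ → E i (i + 1) = e i)
    (hE1 : ∀ i j : ℕ, 1 ≤ i → i + 1 < j → j ≤ θ + 1 →
      E i j = e (j - 1) * E i (j - 1) - q⁻¹ • (E i (j - 1) * e (j - 1)))
    (hE2 : ∀ i j : ℕ, 1 ≤ i → θ + 1 < j → j ≤ pr (2 * θ + 1) i - 1 →
      E i j = e (pr (2 * θ + 1) j) * E i (j - 1) -
        (q ^ ((-1 : ℤ) + (if j = θ + 2 then 1 else 0))) •
          (E i (j - 1) * e (pr (2 * θ + 1) j))) :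
    ∀ i j : ℕ, 1 ≤ i → i ≤ θ → i < j → j ≤ pr (2 * θ + 1) i - 1 →
      E i j = lamB θ q v i j •
        (z (2 * θ + 1) q v (pr (2 * θ + 1) j) (pr (2 * θ + 1) i) * z (2 * θ + 1) q v i i) := by
  exact main_gen (z (2 * θ + 1) q v) θ hθ q v hq0 hq1 hqm1 hv (good_z _ q v) e E he hE0 hE1 hE2

end SOq
end
end

section
/- In the tensor product algebra 𝒪_q(B⁺) ⊗_ℂ 𝒪_q(B⁺): for all indices with i ≤ t < s ≤ j ≤ n such that t ≠ s' and (if n is odd) n₀ ∉ {i, j}, one has (z_{is} ⊗ z_{sj})(z_{it} ⊗ z_{tj}) = q^{−2} (z_{it} ⊗ z_{tj})(z_{is} ⊗ z_{sj}). -/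
noncomputable section
open scoped TensorProduct

namespace SOq

theorem sumL (n : ℕ) (q v : ℂ) {A : Type*} [AddCommGroup A] [Module ℂ A] (a b : ℕ)
    (ha : a ∈ Finset.Icc 1 n) (hb : b ∈ Finset.Icc 1 n) (h : b ≠ pr n a) (f : ℕ → ℕ → A) :
    ∑ k ∈ Finset.Icc 1 n, ∑ l ∈ Finset.Icc 1 n, Rc n q v l k a b • f k l =
      (if a = b then q else 1) • f b a + (if a < b then q - q⁻¹ else 0) • f a b := by
  have h' : a ≠ pr n b := by
    simp only [pr, Finset.mem_Icc] at *; omega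
  have e : ∀ k l, Rc n q v l k a b • f k l =
      (if k = b then (if l = a then (if a = b then q else 1) • f b a else 0) else 0) +
      (if k = a then (if l = b then (if a < b then q - q⁻¹ else 0) • f a b else 0) else 0) := by
    intro k l
    have hJ : Jc n v a b = 0 := by simp [Jc, h]
    rw [Rc, hJ, mul_zero, sub_zero, add_smul]
    congr 1
    · by_cases h1 : k = b
      · by_cases h2 : l = a
        · subst h1 h2
          by_cases h3 : l = k <;> simp_all
        · simp [h2]
      · simp [h1]
    · by_cases h1 : k = a
      · by_cases h2 : l = b
        · subst h1 h2
          by_cases h3 : k < l <;> simp [h3]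
        · simp [h2]
      · simp [h1]
  simp only [e, Finset.sum_add_distrib]
  simp only [Finset.sum_ite_eq', Finset.sum_ite_irrel, Finset.sum_const_zero, ha, hb, if_true]

theorem sumR (n : ℕ) (q v : ℂ) {A : Type*} [AddCommGroup A] [Module ℂ A] (i j : ℕ)
    (hi : i ∈ Finset.Icc 1 n) (hj : j ∈ Finset.Icc 1 n) (h : j ≠ pr n i) (f : ℕ → ℕ → A) :
    ∑ k ∈ Finset.Icc 1 n, ∑ l ∈ Finset.Icc 1 n, Rc n q v j i k l • f k l =
      (if j = i then q else 1) • f j i + (if i < j then q - q⁻¹ else 0) • f i j := by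
  have e : ∀ k l, Rc n q v j i k l • f k l =
      (if k = j then (if l = i then (if j = i then q else 1) • f j i else 0) else 0) +
      (if k = i then (if l = j then (if i < j then q - q⁻¹ else 0) • f i j else 0) else 0) := by
    intro k l
    have hJ : Jc n v i j = 0 := by simp [Jc, h]
    rw [Rc, hJ, zero_mul, sub_zero, add_smul]
    congr 1
    · by_cases h1 : k = j
      · by_cases h2 : l = i
        · subst h1 h2
          by_cases h3 : k = l <;> simp_all
        · simp [h2, Ne.symm h2]
      · simp [h1, Ne.symm h1]
    · by_cases h1 : k = i
      · by_cases h2 : l = j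
        · subst h1 h2
          by_cases h3 : k < l <;> simp [h3]
        · simp [h2, Ne.symm h2]
      · simp [h1, Ne.symm h1]
  simp only [e, Finset.sum_add_distrib]
  simp only [Finset.sum_ite_eq', Finset.sum_ite_irrel, Finset.sum_const_zero, hi, hj, if_true]

theorem frt_eq (n : ℕ) (q v : ℂ) (i b j a : ℕ) (hi : i ∈ Finset.Icc 1 n)
    (hb : b ∈ Finset.Icc 1 n) (hj : j ∈ Finset.Icc 1 n) (ha : a ∈ Finset.Icc 1 n)
    (h1 : b ≠ pr n a) (h2 : j ≠ pr n i) :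
    (if a = b then q else 1) • (z n q v i b * z n q v j a) +
        (if a < b then q - q⁻¹ else 0) • (z n q v i a * z n q v j b) =
      (if j = i then q else 1) • (z n q v j a * z n q v i b) +
        (if i < j then q - q⁻¹ else 0) • (z n q v i a * z n q v j b) := by
  have h := RingQuot.mkAlgHom_rel ℂ (Rel.frt (q := q) (v := v) i b j a hi hb hj ha)
  rw [map_zero, frtRel] at h
  simp only [Finset.sum_sub_distrib] at h
  rw [sumL n q v a b ha hb h1 (fun k l => zf i k * zf j l),
    sumR n q v i j hi hj h2 (fun k l => zf k a * zf l b), map_sub, sub_eq_zero] at h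
  simp only [map_add, map_smul, map_mul] at h
  exact h

theorem aux {A : Type*} [Ring A] [Algebra ℂ A] (q : ℂ) (x y : A)
    (e : x + (q - q⁻¹) • y = q • y) : x = q⁻¹ • y := by
  rw [eq_sub_of_add_eq e, ← sub_smul]
  congr 1; ring

theorem row_comm (n : ℕ) (q v : ℂ) (i s t : ℕ) (hi : i ∈ Finset.Icc 1 n)
    (hs : s ∈ Finset.Icc 1 n) (ht : t ∈ Finset.Icc 1 n) (hts : t < s) (h : s ≠ pr n t)
    (hii : i ≠ pr n i) :
    z n q v i s * z n q v i t = q⁻¹ • (z n q v i t * z n q v i s) := by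
  have e := frt_eq n q v i s i t hi hs hi ht h hii
  simp only [hts, hts.ne, if_true, if_false, lt_irrefl, one_smul, zero_smul, add_zero] at e
  exact aux q _ _ e

theorem col_comm (n : ℕ) (q v : ℂ) (j s t : ℕ) (hj : j ∈ Finset.Icc 1 n)
    (hs : s ∈ Finset.Icc 1 n) (ht : t ∈ Finset.Icc 1 n) (hts : t < s) (h : s ≠ pr n t)
    (hjj : j ≠ pr n j) :
    z n q v s j * z n q v t j = q⁻¹ • (z n q v t j * z n q v s j) := by
  have e := frt_eq n q v t j s j ht hj hs hj hjj h
  simp only [hts, hts.ne', if_true, if_false, lt_irrefl, one_smul, zero_smul, add_zero] at e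
  exact aux q _ _ e.symm

/-- `q²`-commutation in the tensor square of `𝒪_q(B⁺)` of type `SO_n`:
for `i ≤ t < s ≤ j ≤ n` with `t ≠ s'` and (if `n` is odd) `n₀ ∉ {i, j}`, one has
`(z_{is} ⊗ z_{sj})(z_{it} ⊗ z_{tj}) = q^{-2} (z_{it} ⊗ z_{tj})(z_{is} ⊗ z_{sj})`. -/
theorem tensor_square_commutation (n : ℕ) (hn : 3 ≤ n) (q v : ℂ) (hq0 : q ≠ 0)
    (hv : v ^ 2 = q) :
    ∀ i t s j : ℕ, 1 ≤ i → i ≤ t → t < s → s ≤ j → j ≤ n →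
      t ≠ pr n s → 2 * i ≠ n + 1 → 2 * j ≠ n + 1 →
      (z n q v i s ⊗ₜ[ℂ] z n q v s j) * (z n q v i t ⊗ₜ[ℂ] z n q v t j) =
        (q ^ (-2 : ℤ)) •
          ((z n q v i t ⊗ₜ[ℂ] z n q v t j) * (z n q v i s ⊗ₜ[ℂ] z n q v s j)) := by
  intro i t s j h1 h2 h3 h4 h5 h6 h7 h8
  have hi : i ∈ Finset.Icc 1 n := Finset.mem_Icc.2 (by omega)
  have ht : t ∈ Finset.Icc 1 n := Finset.mem_Icc.2 (by omega)
  have hs : s ∈ Finset.Icc 1 n := Finset.mem_Icc.2 (by omega)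
  have hj : j ∈ Finset.Icc 1 n := Finset.mem_Icc.2 (by omega)
  have hst : s ≠ pr n t := by simp only [pr] at *; omega
  have hii : i ≠ pr n i := by simp only [pr]; omega
  have hjj : j ≠ pr n j := by simp only [pr]; omega
  rw [Algebra.TensorProduct.tmul_mul_tmul, Algebra.TensorProduct.tmul_mul_tmul,
    row_comm n q v i s t hi hs ht h3 hst hii, col_comm n q v j s t hj hs ht h3 hst hjj,
    TensorProduct.smul_tmul_smul]
  congr 1
  rw [zpow_neg, ← mul_inv]
  norm_cast
  rw [pow_two]

end SOq
end
end
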